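/- Let σ ≥ 2 and let ℋ be the linearized NLS operator of the context. Then the edges ±1 of the essential spectrum are neither eigenvalues nor resonances: every bounded, twice continuously differentiable f : ℝ → ℂ² satisfying ℋf = f or ℋf = −f vanishes identically. -/

import Mathlib

noncomputable section

open Real MeasureTheory

/-- `φ^(2σ)(x) = (σ+1)·cosh(σx)^(−2)` where `φ` is the NLS ground state. -/
def phiPow (σ x : ℝ) : ℝ := (σ + 1) / Real.cosh (σ * x) ^ 2

/-- The linearized NLS operator `ℋ` about the standing wave `e^{it}φ`:
`ℋf = (−f₁'' + f₁ − (σ+1)φ^{2σ}f₁ − σφ^{2σ}f₂, f₂'' − f₂ + (σ+1)φ^{2σ}f₂ + σφ^{2σ}f₁)`. -/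
def linH (σ : ℝ) (f : ℝ → ℂ × ℂ) (x : ℝ) : ℂ × ℂ :=
  (-(iteratedDeriv 2 (fun y => (f y).1) x) + (f x).1
      - (((σ + 1) * phiPow σ x : ℝ) : ℂ) * (f x).1 - ((σ * phiPow σ x : ℝ) : ℂ) * (f x).2,
    iteratedDeriv 2 (fun y => (f y).2) x - (f x).2
      + (((σ + 1) * phiPow σ x : ℝ) : ℂ) * (f x).2 + ((σ * phiPow σ x : ℝ) : ℂ) * (f x).1)

/-! For `E = ±1` and a real-linear `A : ℂ → ℝ`, the functions `u = A f₁ + A f₂` and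
`v = E (A f₁ − A f₂)` solve `L₊u = v`, `L₋v = u`, with `L₊ = −∂² + 1 − (2σ+1)φ^(2σ)` and
`L₋ = −∂² + 1 − φ^(2σ)`. With `R* = −∂ + (σ+1)tanh(σx)` and `S* = −∂ + tanh(σx)` one has
`(L₊ − 1)R*S* = R*S*D`, where `D = −∂² + (σ−1)sech²(σx)` is repulsive.

A bounded `u` need not be of the form `R*S*ζ` with `ζ` bounded: it has to be orthogonal to `φ^(σ+1)`
and `R*`-preimages of it to `φ`. Adding `c₁xφ + c₂x²φ` to `v`, and its image under `L₋` to `u`, with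
suitable `c₁`, `c₂`, meets both conditions. The pairings of the equations with the corrected
solution then form an exact derivative `G'` equal to a sum of squares in `u`, `v` and `c₁`, `c₂`;
the term in `c₂` is nonnegative because `σ ≥ 2`. Bounded solutions at the threshold have
derivatives tending to `0`, so `G` vanishes at `±∞`. Hence `G' = 0`, which forces
`c₁ = c₂ = 0` and `ζ = 0`, so `u = 0` and `v = L₊u = 0`.
-/

section DecayAtInfinity

open Filter Set Topology

variable {F : Type*} [NormedAddCommGroup F] [NormedSpace ℝ F]

lemma eventually_cocompact_forall_dist_le {α : Type*} [PseudoMetricSpace α] [ProperSpace α]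
    {P : α → Prop} (hP : ∀ᶠ y in cocompact α, P y) (r : ℝ) :
    ∀ᶠ x in cocompact α, ∀ y, dist y x ≤ r → P y := by
  rcases isEmpty_or_nonempty α with _ | ⟨⟨c⟩⟩
  · exact Eventually.of_forall fun x => isEmptyElim x
  rw [← Metric.cobounded_eq_cocompact] at hP ⊢
  obtain ⟨R, -, hR⟩ := (Metric.hasBasis_cobounded_compl_closedBall c).eventually_iff.1 hP
  refine (Metric.hasBasis_cobounded_compl_closedBall c).eventually_iff.2
    ⟨R + r, trivial, fun x hx y hyx => hR ?_⟩
  simp only [mem_compl_iff, Metric.mem_closedBall, not_le] at hx ⊢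
  linarith [dist_triangle_left x c y]

lemma norm_deriv_le_of_norm_le {f f' f'' : ℝ → F} {x h B M : ℝ} (hh : 0 < h)
    (hf : ∀ y, HasDerivAt f (f' y) y) (hf' : ∀ y, HasDerivAt f' (f'' y) y)
    (hB : ∀ y, dist y x ≤ h → ‖f y‖ ≤ B) (hM : ∀ y, dist y x ≤ h → ‖f'' y‖ ≤ M) :
    ‖f' x‖ ≤ 2 * B / h + M * h := by
  have dist_le {y : ℝ} (hy : y ∈ Icc x (x + h)) : dist y x ≤ h := by
    rw [Real.dist_eq, abs_of_nonneg (by linarith [hy.1])]; linarith [hy.2]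
  have hM₀ : 0 ≤ M := (norm_nonneg _).trans (hM x (by simpa using hh.le))
  have slope_bound : ∀ y ∈ Icc x (x + h), ‖f' y - f' x‖ ≤ M * h := fun y hy =>
    (norm_image_sub_le_of_norm_deriv_le_segment' (fun z _ => (hf' z).hasDerivWithinAt)
      (fun z hz => hM z (dist_le (Ico_subset_Icc_self hz))) y hy).trans
      (by gcongr; linarith [hy.2])
  have taylor : ‖(f (x + h) - (x + h) • f' x) - (f x - x • f' x)‖ ≤ M * h * (x + h - x) :=
    norm_image_sub_le_of_norm_deriv_le_segment' (f := fun y => f y - y • f' x)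
      (fun y _ => ((hf y).sub ((hasDerivAt_id y).smul_const (f' x))).hasDerivWithinAt)
      (fun y hy => by simpa using slope_bound y (Ico_subset_Icc_self hy)) (x + h)
      (right_mem_Icc.2 (by linarith))
  have hdiff : h • f' x = (f (x + h) - f x)
      - ((f (x + h) - (x + h) • f' x) - (f x - x • f' x)) := by module
  have : h * ‖f' x‖ ≤ 2 * B + M * h * h := by
    calc h * ‖f' x‖ = ‖h • f' x‖ := by rw [norm_smul, Real.norm_of_nonneg hh.le]
      _ ≤ ‖f (x + h)‖ + ‖f x‖ + M * h * (x + h - x) := by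
        rw [hdiff]
        exact (norm_sub_le _ _).trans (add_le_add (norm_sub_le _ _) taylor)
      _ ≤ 2 * B + M * h * h := by
        have := hB (x + h) (dist_le (right_mem_Icc.2 (by linarith)))
        have := hB x (by simpa using hh.le)
        rw [add_sub_cancel_left]; linarith
  rw [← mul_le_mul_iff_right₀ hh]
  refine this.trans_eq ?_
  field_simp

lemma boundedAtFilter_deriv {f f' f'' : ℝ → F} (hf : ∀ x, HasDerivAt f (f' x) x)
    (hf' : ∀ x, HasDerivAt f' (f'' x) x) (hB : BoundedAtFilter (cocompact ℝ) f)
    (hB'' : BoundedAtFilter (cocompact ℝ) f'') : BoundedAtFilter (cocompact ℝ) f' := by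
  obtain ⟨B, hB⟩ := hB.bound
  obtain ⟨M, hM⟩ := hB''.bound
  simp only [Pi.one_apply, norm_one, mul_one] at hB hM
  refine .of_bound (2 * B / 1 + M * 1) ?_
  filter_upwards [eventually_cocompact_forall_dist_le hB 1,
    eventually_cocompact_forall_dist_le hM 1] with x hBx hMx
  simpa using norm_deriv_le_of_norm_le one_pos hf hf' hBx hMx

lemma zeroAtFilter_deriv {f f' f'' : ℝ → F} (hf : ∀ x, HasDerivAt f (f' x) x)
    (hf' : ∀ x, HasDerivAt f' (f'' x) x) (hB : BoundedAtFilter (cocompact ℝ) f)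
    (h₀ : ZeroAtFilter (cocompact ℝ) f'') : ZeroAtFilter (cocompact ℝ) f' := by
  obtain ⟨B, hB₀, hB⟩ := hB.exists_pos
  have hB := hB.bound
  simp only [Pi.one_apply, norm_one, mul_one] at hB
  refine Metric.tendsto_nhds.2 fun ε hε => ?_
  obtain ⟨h, hh⟩ : ∃ h, h = 4 * B / ε + 1 := ⟨_, rfl⟩
  have hh₀ : 0 < h := by rw [hh]; positivity
  have hM : ∀ᶠ y in cocompact ℝ, ‖f'' y‖ ≤ ε / (2 * h) := by
    filter_upwards [Metric.tendsto_nhds.1 h₀ (ε / (2 * h)) (by positivity)] with y hy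
    simpa using hy.le
  filter_upwards [eventually_cocompact_forall_dist_le hB h,
    eventually_cocompact_forall_dist_le hM h] with x hBx hMx
  rw [dist_zero_right]
  refine (norm_deriv_le_of_norm_le hh₀ hf hf' hBx hMx).trans_lt ?_
  have : 2 * B / h < ε / 2 := by
    rw [div_lt_div_iff₀ hh₀ two_pos, hh]; field_simp; linarith
  have : ε / (2 * h) * h = ε / 2 := by field_simp
  linarith

lemma norm_le_of_hasDerivAt_smul_add {k B δ x L : ℝ} (hL : 0 ≤ L) {r e : ℝ → F}
    (hk : k ≠ 0) (hr : ∀ y, HasDerivAt r (k • r y + e y) y)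
    (hB : ‖r (x + L / k)‖ ≤ B) (hδ : ∀ y, dist y x ≤ L / |k| → ‖e y‖ ≤ δ) :
    ‖r x‖ ≤ exp (-L) * B + δ / |k| * L := by
  have hρ (τ : ℝ) : HasDerivAt (fun τ => exp (-τ) • r (x + τ / k))
      (exp (-τ) • k⁻¹ • e (x + τ / k)) τ := by
    have haff : HasDerivAt (fun τ => x + τ / k) k⁻¹ τ := by
      simpa [div_eq_mul_inv] using ((hasDerivAt_id τ).div_const k).const_add x
    refine ((hasDerivAt_neg τ).exp.smul ((hr _).scomp τ haff)).congr_deriv ?_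
    rw [smul_add, smul_smul k⁻¹ k, inv_mul_cancel₀ hk, Function.comp_apply]
    module
  have hρ' : ∀ τ ∈ Ico 0 L, ‖exp (-τ) • k⁻¹ • e (x + τ / k)‖ ≤ δ / |k| := by
    intro τ hτ
    have he : ‖e (x + τ / k)‖ ≤ δ := hδ _ <| by
      rw [Real.dist_eq, add_sub_cancel_left, abs_div, abs_of_nonneg hτ.1]
      gcongr; exact hτ.2.le
    have hexp : exp (-τ) ≤ 1 := exp_le_one_iff.2 (neg_nonpos.2 hτ.1)
    rw [norm_smul, norm_smul, norm_inv, Real.norm_of_nonneg (exp_pos _).le, Real.norm_eq_abs]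
    calc exp (-τ) * (|k|⁻¹ * ‖e (x + τ / k)‖) ≤ 1 * (|k|⁻¹ * δ) := by gcongr
      _ = δ / |k| := by ring
  have key := norm_image_sub_le_of_norm_deriv_le_segment'
    (fun τ _ => (hρ τ).hasDerivWithinAt) hρ' L (right_mem_Icc.2 hL)
  simp only [neg_zero, exp_zero, zero_div, add_zero, one_smul, sub_zero] at key
  calc ‖r x‖ ≤ ‖exp (-L) • r (x + L / k)‖ + ‖exp (-L) • r (x + L / k) - r x‖ :=
        norm_le_insert _ _
    _ ≤ exp (-L) * B + δ / |k| * L := by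
        rw [norm_smul, Real.norm_of_nonneg (exp_pos _).le]; gcongr

lemma zeroAtFilter_of_hasDerivAt_smul_add {k : ℝ} (hk : k ≠ 0) {r e : ℝ → F}
    (hr : ∀ x, HasDerivAt r (k • r x + e x) x) (hB : BoundedAtFilter (cocompact ℝ) r)
    (he : ZeroAtFilter (cocompact ℝ) e) : ZeroAtFilter (cocompact ℝ) r := by
  obtain ⟨B, hB⟩ := hB.bound
  simp only [Pi.one_apply, norm_one, mul_one] at hB
  refine Metric.tendsto_nhds.2 fun ε hε => ?_
  obtain ⟨L, hL, hLε⟩ : ∃ L, 0 < L ∧ exp (-L) * B < ε / 2 := by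
    have hlim : Tendsto (fun L => exp (-L) * B) atTop (𝓝 0) := by
      simpa using (tendsto_exp_atBot.comp tendsto_neg_atTop_atBot).mul_const B
    exact ((eventually_gt_atTop 0).and (hlim.eventually_lt_const (half_pos hε))).exists
  have := abs_pos.2 hk
  have hδ : ∀ᶠ y in cocompact ℝ, ‖e y‖ ≤ ε * |k| / (2 * L) := by
    filter_upwards [Metric.tendsto_nhds.1 he (ε * |k| / (2 * L)) (by positivity)] with y hy
    simpa using hy.le
  filter_upwards [eventually_cocompact_forall_dist_le hB (L / |k|),
    eventually_cocompact_forall_dist_le hδ (L / |k|)] with x hBx hδx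
  have hdist : dist (x + L / k) x ≤ L / |k| := by
    rw [Real.dist_eq, add_sub_cancel_left, abs_div, abs_of_pos hL]
  rw [dist_zero_right]
  refine (norm_le_of_hasDerivAt_smul_add hL.le hk hr (hBx _ hdist) hδx).trans_lt ?_
  have : ε * |k| / (2 * L) / |k| * L = ε / 2 := by field_simp
  linarith

lemma zeroAtFilter_deriv_of_hasDerivAt_sq_smul_add {k : ℝ} (hk : k ≠ 0) {f f' e : ℝ → F}
    (hf : ∀ x, HasDerivAt f (f' x) x) (hf' : ∀ x, HasDerivAt f' (k ^ 2 • f x + e x) x)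
    (hB : BoundedAtFilter (cocompact ℝ) f) (he : ZeroAtFilter (cocompact ℝ) e) :
    ZeroAtFilter (cocompact ℝ) f' := by
  have hB' : BoundedAtFilter (cocompact ℝ) f' :=
    boundedAtFilter_deriv hf hf' hB ((hB.smul (k ^ 2)).add he.boundedAtFilter)
  have hfactor {c : ℝ} (hc : c ≠ 0) (hck : c ^ 2 = k ^ 2) :
      ZeroAtFilter (cocompact ℝ) fun x => f' x + c • f x :=
    zeroAtFilter_of_hasDerivAt_smul_add hc
      (fun x => ((hf' x).add ((hf x).const_smul c)).congr_deriv (by rw [← hck]; module))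
      (hB'.add (hB.smul c)) he
  refine (((hfactor hk rfl).add (hfactor (neg_ne_zero.2 hk) (neg_sq k))).smul
    (2⁻¹ : ℝ)).congr fun x => ?_
  simp only [Pi.smul_apply, Pi.add_apply]
  module

lemma deriv_eq_zero_of_nonneg_of_zeroAtFilter {G G' : ℝ → ℝ} (hG : ∀ x, HasDerivAt G (G' x) x)
    (hG' : ∀ x, 0 ≤ G' x) (h₀ : ZeroAtFilter (cocompact ℝ) G) (x : ℝ) : G' x = 0 := by
  have hmono : Monotone G := monotone_of_hasDerivAt_nonneg hG hG'
  rw [ZeroAtFilter, cocompact_eq_atBot_atTop, tendsto_sup] at h₀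
  have hzero : G = fun _ => 0 := funext fun y =>
    le_antisymm (hmono.ge_of_tendsto h₀.2 y) (hmono.le_of_tendsto h₀.1 y)
  exact (hG x).unique (hzero ▸ hasDerivAt_const x 0)

end DecayAtInfinity

section SechPow

open Filter Topology

lemma hasDerivAt_tanh_mul (σ x : ℝ) :
    HasDerivAt (fun x => tanh (σ * x)) (σ * (1 - tanh (σ * x) ^ 2)) x := by
  have hc := (cosh_pos (σ * x)).ne'
  have hσ : HasDerivAt (fun x => σ * x) σ x := by simpa using (hasDerivAt_id x).const_mul σ
  simp only [tanh_eq_sinh_div_cosh]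
  refine (hσ.sinh.div hσ.cosh hc).congr_deriv ?_
  field_simp

lemma boundedAtFilter_tanh_mul (σ : ℝ) (l : Filter ℝ) :
    BoundedAtFilter l fun x => tanh (σ * x) :=
  .of_bound 1 (.of_forall fun x => by simpa using (abs_tanh_lt_one (σ * x)).le)

/-- The function `x ↦ sech(σx)^(m/σ)`, which decays like `e^(-m|x|)`. For `m = 1` it is the ground
state `φ`, normalised to have value `1` at the origin. -/
def sechPow (σ m x : ℝ) : ℝ := cosh (σ * x) ^ (-m / σ)

variable {σ m : ℝ}

lemma sechPow_pos (σ m x : ℝ) : 0 < sechPow σ m x := rpow_pos_of_pos (cosh_pos _) _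

lemma sechPow_neg (σ m x : ℝ) : sechPow σ m (-x) = sechPow σ m x := by
  simp only [sechPow, mul_neg, cosh_neg]

lemma hasDerivAt_sechPow (hσ : σ ≠ 0) (m x : ℝ) :
    HasDerivAt (sechPow σ m) (-m * tanh (σ * x) * sechPow σ m x) x := by
  have hc := (cosh_pos (σ * x)).ne'
  have hσx : HasDerivAt (fun x => σ * x) σ x := by simpa using (hasDerivAt_id x).const_mul σ
  refine (hσx.cosh.rpow_const (p := -m / σ) (Or.inl hc)).congr_deriv ?_
  rw [rpow_sub_one hc, tanh_eq_sinh_div_cosh, sechPow]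
  field_simp

lemma continuous_sechPow (hσ : σ ≠ 0) (m : ℝ) : Continuous (sechPow σ m) :=
  continuous_iff_continuousAt.2 fun x => (hasDerivAt_sechPow hσ m x).continuousAt

lemma exp_le_sechPow (hσ : 0 < σ) (hm : 0 ≤ m) (x : ℝ) : exp (-m * |x|) ≤ sechPow σ m x := by
  have hcosh : cosh (σ * x) ≤ exp (σ * |x|) := by
    rw [← cosh_abs, abs_mul, abs_of_pos hσ, cosh_eq]
    linarith [exp_le_exp.2 (neg_le_self (by positivity : 0 ≤ σ * |x|))]
  calc exp (-m * |x|) = exp (σ * |x|) ^ (-m / σ) := by rw [← exp_mul]; congr 1; field_simp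
    _ ≤ sechPow σ m x := rpow_le_rpow_of_nonpos (cosh_pos _) hcosh
        (div_nonpos_of_nonpos_of_nonneg (neg_nonpos.2 hm) hσ.le)

lemma sechPow_le_exp (hσ : 0 < σ) (hm : 0 ≤ m) (x : ℝ) :
    sechPow σ m x ≤ 2 ^ (m / σ) * exp (-m * |x|) := by
  have hcosh : 2⁻¹ * exp (σ * |x|) ≤ cosh (σ * x) := by
    rw [← cosh_abs, abs_mul, abs_of_pos hσ, cosh_eq]
    linarith [exp_pos (-(σ * |x|))]
  calc sechPow σ m x ≤ (2⁻¹ * exp (σ * |x|)) ^ (-m / σ) :=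
        rpow_le_rpow_of_nonpos (by positivity) hcosh
          (div_nonpos_of_nonpos_of_nonneg (neg_nonpos.2 hm) hσ.le)
    _ = 2 ^ (m / σ) * exp (-m * |x|) := by
        rw [mul_rpow (by positivity) (exp_pos _).le, ← exp_mul, inv_rpow zero_le_two, neg_div,
          rpow_neg zero_le_two, inv_inv]
        congr 2; field_simp

lemma sechPow_two_mul (hσ : σ ≠ 0) (x : ℝ) :
    sechPow σ (2 * σ) x = 1 - tanh (σ * x) ^ 2 := by
  have hc := (cosh_pos (σ * x)).ne'
  rw [sechPow, neg_div, mul_div_cancel_right₀ _ hσ, rpow_neg (cosh_pos _).le, rpow_two,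
    tanh_eq_sinh_div_cosh]
  field_simp
  rw [cosh_sq]; ring

lemma zeroAtFilter_pow_mul_sechPow (hσ : 0 < σ) (hm : 0 < m) (n : ℕ) :
    ZeroAtFilter (cocompact ℝ) fun x => x ^ n * sechPow σ m x := by
  have hexp : Tendsto (fun y : ℝ => y ^ n * exp (-m * y)) atTop (𝓝 0) := by
    simpa only [rpow_natCast] using tendsto_rpow_mul_exp_neg_mul_atTop_nhds_zero n m hm
  have hlim : Tendsto (fun x : ℝ => 2 ^ (m / σ) * (‖x‖ ^ n * exp (-m * ‖x‖))) (cocompact ℝ)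
      (𝓝 0) := by
    simpa using (hexp.comp (tendsto_norm_cocompact_atTop (E := ℝ))).const_mul _
  refine squeeze_zero_norm (fun x => ?_) hlim
  rw [norm_mul, norm_pow, Real.norm_of_nonneg (sechPow_pos σ m x).le, mul_left_comm]
  gcongr
  exact sechPow_le_exp hσ hm.le x

end SechPow

section Inversion

open Filter Set

/-- `η` solves `(−∂ + m·tanh(σx))η = z`. For `m = 1` and `m = σ + 1` the operators on the left are
the factors `S*` and `R*` of the intertwining relation `(L₊ − 1)R*S* = R*S*D`, where
`D = −∂² + (σ−1)sech²(σx)`. -/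
def SolvesDarboux (σ m : ℝ) (η z : ℝ → ℝ) : Prop :=
  ∀ x, HasDerivAt η (m * tanh (σ * x) * η x - z x) x

variable {σ m : ℝ} {w : ℝ → ℝ}

lemma integrable_sechPow_mul (hσ : 0 < σ) (hm : 0 < m) (hw : Continuous w)
    (hB : BoundedAtFilter (cocompact ℝ) w) : Integrable fun x => sechPow σ m x * w x := by
  have hdecay : sechPow σ m =O[cocompact ℝ] fun x => (1 + x ^ 2)⁻¹ := by
    have hzero : ZeroAtFilter (cocompact ℝ) fun x => (1 + x ^ 2) * sechPow σ m x := by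
      refine (zeroAtFilter_pow_mul_sechPow hσ hm 0).add
        (zeroAtFilter_pow_mul_sechPow hσ hm 2) |>.congr fun x => ?_
      simp only [Pi.add_apply]; ring
    refine (Asymptotics.IsBigO.mul hzero.boundedAtFilter
      (Asymptotics.isBigO_refl (fun x : ℝ => (1 + x ^ 2)⁻¹) _)).congr (fun x => ?_)
      fun x => one_mul _
    field_simp
  refine ((continuous_sechPow hσ.ne' m).mul hw).locallyIntegrable.integrable_of_isBigO_cocompact
    (g := fun x => (1 + x ^ 2)⁻¹) ?_ (integrable_inv_one_add_sq.integrableAtFilter _)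
  simpa using! hdecay.mul hB

lemma hasDerivAt_integral_Iic {g : ℝ → ℝ} (hg : Continuous g) (hi : Integrable g) (x : ℝ) :
    HasDerivAt (fun x => ∫ y in Iic x, g y) (g x) x := by
  have hsplit : (fun x => ∫ y in Iic x, g y) = fun x => (∫ y in Iic 0, g y) + ∫ y in 0..x, g y := by
    funext x
    rw [← intervalIntegral.integral_Iic_sub_Iic hi.integrableOn hi.integrableOn, add_sub_cancel]
  rw [hsplit]
  exact (hg.integral_hasStrictDerivAt 0 x).hasDerivAt.const_add _

lemma integral_Ioi_sechPow_mul_isBigO (hσ : 0 < σ) (hm : 0 < m) (hB : BoundedAtFilter atTop w) :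
    (fun x => ∫ y in Ioi x, sechPow σ m y * w y) =O[atTop] sechPow σ m := by
  obtain ⟨B, hB₀, hB⟩ := hB.exists_pos
  obtain ⟨X, hX⟩ := eventually_atTop.1 hB.bound
  simp only [Pi.one_apply, norm_one, mul_one] at hX
  refine .of_bound (B * 2 ^ (m / σ) / m) ?_
  filter_upwards [eventually_ge_atTop X, eventually_ge_atTop 0] with x hxX hx₀
  have hdom : ∀ y ∈ Ioi x, ‖sechPow σ m y * w y‖ ≤ B * 2 ^ (m / σ) * exp (-m * y) := by
    intro y hy
    have hE := sechPow_le_exp hσ hm.le y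
    rw [abs_of_pos (hx₀.trans_lt hy)] at hE
    rw [norm_mul, Real.norm_of_nonneg (sechPow_pos σ m y).le, mul_comm, mul_assoc]
    exact mul_le_mul (hX y (hxX.trans (le_of_lt hy))) hE (sechPow_pos σ m y).le hB₀.le
  have hi : IntegrableOn (fun y => B * 2 ^ (m / σ) * exp (-m * y)) (Ioi x) :=
    (integrableOn_exp_mul_Ioi (neg_lt_zero.2 hm) x).const_mul _
  calc ‖∫ y in Ioi x, sechPow σ m y * w y‖
      ≤ ∫ y in Ioi x, B * 2 ^ (m / σ) * exp (-m * y) :=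
        norm_integral_le_of_norm_le hi ((ae_restrict_iff' measurableSet_Ioi).2 (.of_forall hdom))
    _ = B * 2 ^ (m / σ) / m * exp (-m * |x|) := by
        rw [integral_const_mul, integral_exp_mul_Ioi (neg_lt_zero.2 hm), abs_of_nonneg hx₀]
        field_simp
    _ ≤ B * 2 ^ (m / σ) / m * ‖sechPow σ m x‖ := by
        rw [Real.norm_of_nonneg (sechPow_pos σ m x).le]
        gcongr
        exact exp_le_sechPow hσ hm.le x

lemma integral_Iic_sechPow_mul_isBigO (hσ : 0 < σ) (hm : 0 < m) (hB : BoundedAtFilter atBot w) :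
    (fun x => ∫ y in Iic x, sechPow σ m y * w y) =O[atBot] sechPow σ m := by
  have hB' : BoundedAtFilter atTop fun y => w (-y) := hB.comp_tendsto tendsto_neg_atTop_atBot
  refine ((integral_Ioi_sechPow_mul_isBigO hσ hm hB').comp_tendsto
    tendsto_neg_atBot_atTop).congr (fun x => ?_) fun x => sechPow_neg σ m x
  have := integral_comp_neg_Ioi (-x) fun y => sechPow σ m y * w y
  simpa only [Function.comp_apply, sechPow_neg, neg_neg] using this

-- The solution is `-E⁻¹ ∫_{-∞}^x E w` with `E = sechPow σ m`; the vanishing moment makes it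
-- bounded at `+∞` as well, where it equals `E⁻¹ ∫_x^∞ E w`.
lemma exists_solvesDarboux (hσ : 0 < σ) (hm : 0 < m) (hw : Continuous w)
    (hB : BoundedAtFilter (cocompact ℝ) w) (h₀ : ∫ x, sechPow σ m x * w x = 0) :
    ∃ η, SolvesDarboux σ m η w ∧ BoundedAtFilter (cocompact ℝ) η := by
  have hi := integrable_sechPow_mul hσ hm hw hB
  have hE (x : ℝ) := (sechPow_pos σ m x).ne'
  refine ⟨fun x => -(∫ y in Iic x, sechPow σ m y * w y) / sechPow σ m x, fun x => ?_, ?_⟩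
  · refine ((hasDerivAt_integral_Iic ((continuous_sechPow hσ.ne' m).mul hw) hi x).neg.div
      (hasDerivAt_sechPow hσ.ne' m x) (hE x)).congr_deriv ?_
    simp only [Pi.neg_apply, Pi.mul_apply]
    field_simp [hE x]
    ring
  rw [cocompact_eq_atBot_atTop] at hB ⊢
  have hdiv {l : Filter ℝ} {J : ℝ → ℝ} (hJ : J =O[l] sechPow σ m) :
      BoundedAtFilter l fun x => J x / sechPow σ m x :=
    (hJ.mul (Asymptotics.isBigO_refl (fun x => (sechPow σ m x)⁻¹) l)).congr (fun x => rfl)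
      fun x => mul_inv_cancel₀ (hE x)
  refine Asymptotics.IsBigO.sup
    (hdiv (integral_Iic_sechPow_mul_isBigO hσ hm (hB.mono le_sup_left)).neg_left)
    (hdiv ((integral_Ioi_sechPow_mul_isBigO hσ hm (hB.mono le_sup_right)).congr_left fun x => ?_))
  linear_combination
    h₀ + intervalIntegral.integral_Iic_add_Ioi (b := x) hi.integrableOn hi.integrableOn

lemma exists_solvesDarboux_add (hσ : 0 < σ) (hm : 0 < m) (hw : Continuous w)
    (hB : BoundedAtFilter (cocompact ℝ) w) {n : ℝ} (hn : 0 < n) :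
    ∃ k η, SolvesDarboux σ m η (fun x => w x + k * sechPow σ n x) ∧
      BoundedAtFilter (cocompact ℝ) η := by
  have hEc := continuous_sechPow hσ.ne' n
  have hEb : BoundedAtFilter (cocompact ℝ) (sechPow σ n) := by
    simpa using (zeroAtFilter_pow_mul_sechPow hσ hn 0).boundedAtFilter
  have hi := integrable_sechPow_mul hσ hm hEc hEb
  have hpos : 0 < ∫ x, sechPow σ m x * sechPow σ n x :=
    integral_pos_of_integrable_nonneg_nonzero (x := 0) ((continuous_sechPow hσ.ne' m).mul hEc) hi
      (fun x => (mul_pos (sechPow_pos σ m x) (sechPow_pos σ n x)).le)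
      (mul_pos (sechPow_pos σ m 0) (sechPow_pos σ n 0)).ne'
  refine ⟨-(∫ x, sechPow σ m x * w x) / ∫ x, sechPow σ m x * sechPow σ n x, ?_⟩
  refine exists_solvesDarboux hσ hm (hw.add (hEc.const_mul _)) (hB.add (hEb.const_mul_left _)) ?_
  simp only [mul_add, mul_left_comm (sechPow σ m _)]
  rw [integral_add (integrable_sechPow_mul hσ hm hw hB) (hi.const_mul _), integral_const_mul]
  field_simp
  ring

end Inversion

section Schrodinger

open Filter

/-- `f` is a classical solution of the stationary Schrödinger equation `−f'' + V f = g`. -/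
structure SolvesSchrodinger (V f g : ℝ → ℝ) : Prop where
  differentiable : Differentiable ℝ f
  hasDerivAt_deriv : ∀ x, HasDerivAt (deriv f) (V x * f x - g x) x

namespace SolvesSchrodinger

variable {V f f' g h k f₁ f₂ g₁ g₂ : ℝ → ℝ}

lemma of_hasDerivAt (hf : ∀ x, HasDerivAt f (f' x) x)
    (hf' : ∀ x, HasDerivAt f' (V x * f x - g x) x) : SolvesSchrodinger V f g where
  differentiable x := (hf x).differentiableAt
  hasDerivAt_deriv := (funext fun x => (hf x).deriv : deriv f = f') ▸ hf'

lemma hasDerivAt (hf : SolvesSchrodinger V f g) (x : ℝ) : HasDerivAt f (deriv f x) x :=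
  (hf.differentiable x).hasDerivAt

lemma add (h₁ : SolvesSchrodinger V f₁ g₁) (h₂ : SolvesSchrodinger V f₂ g₂) :
    SolvesSchrodinger V (fun x => f₁ x + f₂ x) fun x => g₁ x + g₂ x :=
  of_hasDerivAt (fun x => (h₁.hasDerivAt x).add (h₂.hasDerivAt x)) fun x =>
    ((h₁.hasDerivAt_deriv x).add (h₂.hasDerivAt_deriv x)).congr_deriv (by ring)

lemma hasDerivAt_wronskian (hf : SolvesSchrodinger V f g) (hh : SolvesSchrodinger V h k) (x : ℝ) :
    HasDerivAt (fun x => f x * deriv h x - deriv f x * h x) (g x * h x - f x * k x) x :=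
  (((hf.hasDerivAt x).mul (hh.hasDerivAt_deriv x)).sub
    ((hf.hasDerivAt_deriv x).mul (hh.hasDerivAt x))).congr_deriv (by ring)

lemma zeroAtFilter_deriv (hf : SolvesSchrodinger V f g) (hV : BoundedAtFilter (cocompact ℝ) V)
    (hf₀ : ZeroAtFilter (cocompact ℝ) f) (hg₀ : ZeroAtFilter (cocompact ℝ) g) :
    ZeroAtFilter (cocompact ℝ) (deriv f) :=
  _root_.zeroAtFilter_deriv hf.hasDerivAt hf.hasDerivAt_deriv hf₀.boundedAtFilter
    (((hV.mul_zeroAtFilter hf₀).add hg₀.neg).congr fun _ => (sub_eq_add_neg _ _).symm)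

lemma eq_zero_of_left (hf : SolvesSchrodinger V f g) (h₀ : ∀ x, f x = 0) (x : ℝ) : g x = 0 := by
  obtain rfl : f = fun _ => 0 := funext h₀
  have hd : deriv (fun _ : ℝ => (0 : ℝ)) = fun _ => 0 := funext fun y => deriv_const y 0
  have := (hd ▸ hf.hasDerivAt_deriv x).unique (hasDerivAt_const x 0)
  linarith

end SolvesSchrodinger

/-- The potential of `L₊ = −∂² + 1 − (2σ+1)φ^(2σ)`. -/
def potPlus (σ x : ℝ) : ℝ := 1 - (2 * σ + 1) * phiPow σ x

/-- The potential of `L₋ = −∂² + 1 − φ^(2σ)`. -/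
def potMinus (σ x : ℝ) : ℝ := 1 - phiPow σ x

variable {σ m : ℝ}

lemma phiPow_eq (σ x : ℝ) : phiPow σ x = (σ + 1) * (1 - tanh (σ * x) ^ 2) := by
  have hc := (cosh_pos (σ * x)).ne'
  rw [phiPow, tanh_eq_sinh_div_cosh]
  field_simp
  rw [cosh_sq]; ring

lemma zeroAtFilter_one_sub_tanh_sq (hσ : 0 < σ) :
    ZeroAtFilter (cocompact ℝ) fun x => 1 - tanh (σ * x) ^ 2 := by
  simpa only [pow_zero, one_mul, sechPow_two_mul hσ.ne'] using
    zeroAtFilter_pow_mul_sechPow hσ (by positivity : 0 < 2 * σ) 0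

lemma zeroAtFilter_phiPow (hσ : 0 < σ) : ZeroAtFilter (cocompact ℝ) (phiPow σ) :=
  ((zeroAtFilter_one_sub_tanh_sq hσ).smul (σ + 1)).congr fun x => (phiPow_eq σ x).symm

lemma boundedAtFilter_potPlus (hσ : 0 < σ) : BoundedAtFilter (cocompact ℝ) (potPlus σ) :=
  (const_boundedAtFilter _ 1).sub
    ((zeroAtFilter_phiPow hσ).boundedAtFilter.const_mul_left (2 * σ + 1))

lemma boundedAtFilter_potMinus (hσ : 0 < σ) : BoundedAtFilter (cocompact ℝ) (potMinus σ) :=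
  (const_boundedAtFilter _ 1).sub (zeroAtFilter_phiPow hσ).boundedAtFilter

-- `u + v` has second derivative tending to `0`, while `(u - v)'' ≈ 2(u - v)`.
lemma zeroAtFilter_deriv_of_solvesSchrodinger {u v : ℝ → ℝ} (hσ : 0 < σ)
    (hu : SolvesSchrodinger (potPlus σ) u v) (hv : SolvesSchrodinger (potMinus σ) v u)
    (hub : BoundedAtFilter (cocompact ℝ) u) (hvb : BoundedAtFilter (cocompact ℝ) v) :
    ZeroAtFilter (cocompact ℝ) (deriv u) ∧ ZeroAtFilter (cocompact ℝ) (deriv v) := by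
  have hφu := (zeroAtFilter_phiPow hσ).mul_boundedAtFilter hub
  have hφv := (zeroAtFilter_phiPow hσ).mul_boundedAtFilter hvb
  have hsum : ZeroAtFilter (cocompact ℝ) fun x => deriv u x + deriv v x := by
    refine zeroAtFilter_deriv (fun x => (hu.hasDerivAt x).add (hv.hasDerivAt x))
      (fun x => (hu.hasDerivAt_deriv x).add (hv.hasDerivAt_deriv x)) (hub.add hvb)
      ((hφu.smul (-(2 * σ + 1))).add (hφv.smul (-1)) |>.congr fun x => ?_)
    simp only [Pi.add_apply, Pi.smul_apply, Pi.mul_apply, smul_eq_mul, potPlus, potMinus]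
    ring
  have hdiff : ZeroAtFilter (cocompact ℝ) fun x => deriv u x - deriv v x := by
    refine zeroAtFilter_deriv_of_hasDerivAt_sq_smul_add (sqrt_ne_zero'.2 two_pos)
      (fun x => (hu.hasDerivAt x).sub (hv.hasDerivAt x))
      (fun x => ((hu.hasDerivAt_deriv x).sub (hv.hasDerivAt_deriv x)).congr_deriv ?_)
      (hub.sub hvb) ((hφu.smul (-(2 * σ + 1))).add hφv)
    simp only [Pi.add_apply, Pi.sub_apply, Pi.smul_apply, Pi.mul_apply, smul_eq_mul, potPlus,
      potMinus, sq_sqrt zero_le_two]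
    ring
  constructor
  · refine ((hsum.add hdiff).smul (2⁻¹ : ℝ)).congr fun x => ?_
    simp only [Pi.smul_apply, Pi.add_apply, smul_eq_mul]
    ring
  · refine ((hsum.add hdiff.neg).smul (2⁻¹ : ℝ)).congr fun x => ?_
    simp only [Pi.smul_apply, Pi.add_apply, Pi.neg_apply, smul_eq_mul]
    ring

-- `r ± tanh(σx) r` satisfies an equation with the constant coefficient `±m`.
lemma zeroAtFilter_of_hasDerivAt_tanh_mul_add {r e : ℝ → ℝ} (hσ : 0 < σ) (hm : m ≠ 0)
    (hr : ∀ x, HasDerivAt r (m * tanh (σ * x) * r x + e x) x)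
    (hB : BoundedAtFilter (cocompact ℝ) r) (he : ZeroAtFilter (cocompact ℝ) e) :
    ZeroAtFilter (cocompact ℝ) r := by
  have ht := boundedAtFilter_tanh_mul σ (cocompact ℝ)
  have hsr := (zeroAtFilter_one_sub_tanh_sq hσ).mul_boundedAtFilter hB
  have hfactor {ε : ℝ} (hε : ε ^ 2 = 1) :
      ZeroAtFilter (cocompact ℝ) fun x => r x + ε * (tanh (σ * x) * r x) := by
    refine zeroAtFilter_of_hasDerivAt_smul_add (k := ε * m)
      (mul_ne_zero (by rintro rfl; simp at hε) hm)
      (fun x => ((hr x).add (((hasDerivAt_tanh_mul σ x).mul (hr x)).const_mul ε)).congr_deriv ?_)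
      (hB.add ((ht.mul hB).const_mul_left ε))
      (he.add (((hsr.smul (σ - m)).add (ht.mul_zeroAtFilter he)).smul ε))
    simp only [Pi.add_apply, Pi.smul_apply, Pi.mul_apply, smul_eq_mul]
    linear_combination -m * tanh (σ * x) * r x * hε
  refine (((hfactor (ε := 1) (by norm_num)).add (hfactor (ε := -1) (by norm_num))).smul
    (2⁻¹ : ℝ)).congr fun x => ?_
  simp only [Pi.smul_apply, Pi.add_apply, smul_eq_mul]
  ring

lemma SolvesDarboux.zeroAtFilter_deriv {η z z' : ℝ → ℝ} (hσ : 0 < σ) (hm : m ≠ 0)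
    (hη : SolvesDarboux σ m η z) (hz : ∀ x, HasDerivAt z (z' x) x)
    (hηb : BoundedAtFilter (cocompact ℝ) η) (hzb : BoundedAtFilter (cocompact ℝ) z)
    (hz₀ : ZeroAtFilter (cocompact ℝ) z') :
    ZeroAtFilter (cocompact ℝ) fun x => m * tanh (σ * x) * η x - z x := by
  have hsη := (zeroAtFilter_one_sub_tanh_sq hσ).mul_boundedAtFilter hηb
  refine zeroAtFilter_of_hasDerivAt_tanh_mul_add (e := fun x =>
      m * σ * ((1 - tanh (σ * x) ^ 2) * η x) + -z' x) hσ hm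
    (fun x => ((((hasDerivAt_tanh_mul σ x).const_mul m).mul (hη x)).sub (hz x)).congr_deriv
      (by ring))
    ((((boundedAtFilter_tanh_mul σ _).smul m).mul hηb).sub hzb)
    ((hsη.smul (m * σ)).add hz₀.neg)

lemma SolvesDarboux.eq_zero_of_left {η z : ℝ → ℝ} (hη : SolvesDarboux σ m η z)
    (h₀ : ∀ x, η x = 0) (x : ℝ) : z x = 0 := by
  obtain rfl : η = fun _ => 0 := funext h₀
  have := (hη x).unique (hasDerivAt_const x 0)
  linarith

end Schrodinger

section Modulation

open Filter

/-- The correction `c₁xφ + c₂x²φ` added to the `L₋`-component of a solution. -/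
def minusMode (σ c₁ c₂ x : ℝ) : ℝ := (c₁ * x + c₂ * x ^ 2) * sechPow σ 1 x

/-- The image `−2c₁φ' + c₂(4xtanh(σx) − 2)φ` of `minusMode` under `L₋`. -/
def plusMode (σ c₁ c₂ x : ℝ) : ℝ :=
  (2 * c₁ * tanh (σ * x) + c₂ * (4 * x * tanh (σ * x) - 2)) * sechPow σ 1 x

/-- The image of `plusMode` under `L₊`; the part `−2c₁φ'` lies in the kernel of `L₊`. -/
def modeSource (σ c₂ x : ℝ) : ℝ := c₂ * (8 + 4 * (σ - 2) * phiPow σ x) * sechPow σ 1 x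

variable {σ c₁ c₂ : ℝ}

lemma hasDerivAt_minusMode (hσ : σ ≠ 0) (c₁ c₂ x : ℝ) : HasDerivAt (minusMode σ c₁ c₂)
    ((c₁ + 2 * c₂ * x - tanh (σ * x) * (c₁ * x + c₂ * x ^ 2)) * sechPow σ 1 x) x := by
  have hx := hasDerivAt_id' x
  refine (((hx.const_mul c₁).add ((hx.pow 2).const_mul c₂)).mul
    (hasDerivAt_sechPow hσ 1 x)).congr_deriv ?_
  simp only [Pi.add_apply, Pi.pow_apply]
  ring

lemma hasDerivAt_plusMode (hσ : σ ≠ 0) (c₁ c₂ x : ℝ) : HasDerivAt (plusMode σ c₁ c₂)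
    ((2 * c₁ * (σ * (1 - tanh (σ * x) ^ 2))
      + c₂ * (4 * tanh (σ * x) + 4 * x * (σ * (1 - tanh (σ * x) ^ 2)))
      - tanh (σ * x) * (2 * c₁ * tanh (σ * x) + c₂ * (4 * x * tanh (σ * x) - 2)))
      * sechPow σ 1 x) x := by
  have hx := hasDerivAt_id' x
  have ht := hasDerivAt_tanh_mul σ x
  refine (((ht.const_mul (2 * c₁)).add
    ((((hx.const_mul 4).mul ht).sub_const 2).const_mul c₂)).mul
    (hasDerivAt_sechPow hσ 1 x)).congr_deriv ?_
  simp only [Pi.add_apply, Pi.mul_apply]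
  ring

lemma solvesSchrodinger_minusMode (hσ : σ ≠ 0) (c₁ c₂ : ℝ) :
    SolvesSchrodinger (potMinus σ) (minusMode σ c₁ c₂) (plusMode σ c₁ c₂) := by
  refine .of_hasDerivAt (hasDerivAt_minusMode hσ c₁ c₂) fun x => ?_
  have hx := hasDerivAt_id' x
  have ht := hasDerivAt_tanh_mul σ x
  refine ((((hx.const_mul (2 * c₂)).const_add c₁).sub
    (ht.mul ((hx.const_mul c₁).add ((hx.pow 2).const_mul c₂)))).mul
    (hasDerivAt_sechPow hσ 1 x)).congr_deriv ?_
  simp only [Pi.add_apply, Pi.sub_apply, Pi.mul_apply, Pi.pow_apply, potMinus, phiPow_eq, minusMode,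
    plusMode]
  ring

lemma solvesSchrodinger_plusMode (hσ : σ ≠ 0) (c₁ c₂ : ℝ) :
    SolvesSchrodinger (potPlus σ) (plusMode σ c₁ c₂) (modeSource σ c₂) := by
  refine .of_hasDerivAt (hasDerivAt_plusMode hσ c₁ c₂) fun x => ?_
  have hx := hasDerivAt_id' x
  have ht := hasDerivAt_tanh_mul σ x
  have hs := ((ht.pow 2).const_sub 1).const_mul σ
  refine ((((hs.const_mul (2 * c₁)).add (((ht.const_mul 4).add
    ((hx.const_mul 4).mul hs)).const_mul c₂)).sub
    (ht.mul ((ht.const_mul (2 * c₁)).add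
      ((((hx.const_mul 4).mul ht).sub_const 2).const_mul c₂)))).mul
    (hasDerivAt_sechPow hσ 1 x)).congr_deriv ?_
  simp only [Pi.add_apply, Pi.sub_apply, Pi.mul_apply, Pi.pow_apply, potPlus, phiPow_eq, plusMode,
    modeSource]
  ring

/-- The explicit part of the primitive of `plusMode * (minusMode - modeSource)`. -/
def modeFlux (σ c₁ c₂ x : ℝ) : ℝ :=
  (c₁ ^ 2 * x
    + c₂ ^ 2 * (2 * x ^ 3 - 16 * x - 8 * (σ - 2) * (x * (1 - tanh (σ * x) ^ 2)))
    + c₁ * c₂ * (3 * x ^ 2 - 8 - 4 * (σ - 2) * (1 - tanh (σ * x) ^ 2))) * sechPow σ 1 x ^ 2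

/-- The quadratic form of the corrections `minusMode` and `plusMode`, up to `modeFlux` and the odd
cross term `4c₁c₂xφ²`. -/
def modeDissipation (σ c₁ c₂ x : ℝ) : ℝ :=
  (c₁ ^ 2 + c₂ ^ 2 * (4 * x ^ 2 + 8 * σ * (σ - 2) * (1 - tanh (σ * x) ^ 2))) * sechPow σ 1 x ^ 2

lemma hasDerivAt_modeFlux (hσ : σ ≠ 0) (c₁ c₂ x : ℝ) : HasDerivAt (modeFlux σ c₁ c₂)
    (plusMode σ c₁ c₂ x * (modeSource σ c₂ x - minusMode σ c₁ c₂ x)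
      + modeDissipation σ c₁ c₂ x + 4 * c₁ * c₂ * (x * sechPow σ 1 x ^ 2)) x := by
  have hx := hasDerivAt_id' x
  have hs := ((hasDerivAt_tanh_mul σ x).pow 2).const_sub 1
  refine (((((hx.const_mul (c₁ ^ 2)).add
    (((((hx.pow 3).const_mul 2).sub (hx.const_mul 16)).sub
      ((hx.mul hs).const_mul (8 * (σ - 2)))).const_mul (c₂ ^ 2))).add
    (((((hx.pow 2).const_mul 3).sub_const 8).sub (hs.const_mul (4 * (σ - 2)))).const_mul
      (c₁ * c₂))).mul ((hasDerivAt_sechPow hσ 1 x).pow 2))).congr_deriv ?_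
  simp only [Pi.add_apply, Pi.sub_apply, Pi.mul_apply, Pi.pow_apply, minusMode, plusMode,
    modeSource, phiPow_eq, modeDissipation]
  push_cast
  ring

lemma zeroAtFilter_sechPow (hσ : 0 < σ) : ZeroAtFilter (cocompact ℝ) (sechPow σ 1) := by
  simpa using zeroAtFilter_pow_mul_sechPow hσ one_pos 0

lemma zeroAtFilter_minusMode (hσ : 0 < σ) (c₁ c₂ : ℝ) :
    ZeroAtFilter (cocompact ℝ) (minusMode σ c₁ c₂) := by
  refine ((zeroAtFilter_pow_mul_sechPow hσ one_pos 1).smul c₁).add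
    ((zeroAtFilter_pow_mul_sechPow hσ one_pos 2).smul c₂) |>.congr fun x => ?_
  simp only [Pi.add_apply, Pi.smul_apply, smul_eq_mul, minusMode]
  ring

lemma zeroAtFilter_plusMode (hσ : 0 < σ) (c₁ c₂ : ℝ) :
    ZeroAtFilter (cocompact ℝ) (plusMode σ c₁ c₂) := by
  have hφ := zeroAtFilter_sechPow hσ
  refine ((boundedAtFilter_tanh_mul σ _).mul_zeroAtFilter ((hφ.smul (2 * c₁)).add
    ((zeroAtFilter_pow_mul_sechPow hσ one_pos 1).smul (4 * c₂)))).add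
    (hφ.smul (-(2 * c₂))) |>.congr fun x => ?_
  simp only [Pi.add_apply, Pi.mul_apply, Pi.smul_apply, smul_eq_mul, plusMode]
  ring

lemma zeroAtFilter_modeSource (hσ : 0 < σ) (c₂ : ℝ) :
    ZeroAtFilter (cocompact ℝ) (modeSource σ c₂) := by
  have hφ := zeroAtFilter_sechPow hσ
  refine (hφ.smul (8 * c₂)).add (((zeroAtFilter_phiPow hσ).mul_boundedAtFilter
    hφ.boundedAtFilter).smul (4 * c₂ * (σ - 2))) |>.congr fun x => ?_
  simp only [Pi.add_apply, Pi.mul_apply, Pi.smul_apply, smul_eq_mul, modeSource]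
  ring

lemma zeroAtFilter_modeFlux (hσ : 0 < σ) (c₁ c₂ : ℝ) :
    ZeroAtFilter (cocompact ℝ) (modeFlux σ c₁ c₂) := by
  have hφ := zeroAtFilter_sechPow hσ
  have hpow (n : ℕ) := (zeroAtFilter_pow_mul_sechPow hσ one_pos n).mul_boundedAtFilter
    hφ.boundedAtFilter
  have hs := (zeroAtFilter_one_sub_tanh_sq hσ).boundedAtFilter
  refine ((((hpow 1).smul (c₁ ^ 2 - 16 * c₂ ^ 2)).add ((hpow 3).smul (2 * c₂ ^ 2))).add
    ((((hpow 2).smul (3 * c₁ * c₂)).add ((hpow 0).smul (-8 * c₁ * c₂))).add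
    (hs.mul_zeroAtFilter (((hpow 1).smul (-8 * (σ - 2) * c₂ ^ 2)).add
      ((hpow 0).smul (-4 * (σ - 2) * c₁ * c₂)))))) |>.congr fun x => ?_
  simp only [Pi.add_apply, Pi.mul_apply, Pi.smul_apply, smul_eq_mul, modeFlux]
  ring

lemma exists_hasDerivAt_mul_sechPow_sq (hσ : 0 < σ) :
    ∃ X : ℝ → ℝ, (∀ x, HasDerivAt X (x * sechPow σ 1 x ^ 2) x) ∧
      ZeroAtFilter (cocompact ℝ) X := by
  have hodd : ∫ x, sechPow σ 1 x * -(x * sechPow σ 1 x) = 0 := by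
    have h := integral_neg_eq_self (fun x => sechPow σ 1 x * -(x * sechPow σ 1 x)) volume
    simp only [sechPow_neg, neg_mul, mul_neg, neg_neg, integral_neg] at h ⊢
    linarith
  have hb : BoundedAtFilter (cocompact ℝ) fun x => -(x * sechPow σ 1 x) := by
    simpa only [pow_one] using! (zeroAtFilter_pow_mul_sechPow hσ one_pos 1).boundedAtFilter.neg
  obtain ⟨η, hη, hηb⟩ := exists_solvesDarboux hσ one_pos
    (continuous_id.mul (continuous_sechPow hσ.ne' 1)).neg hb hodd
  refine ⟨fun x => sechPow σ 1 x * η x, fun x => ?_,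
    (zeroAtFilter_sechPow hσ).mul_boundedAtFilter hηb⟩
  exact ((hasDerivAt_sechPow hσ.ne' 1 x).mul (hη x)).congr_deriv
    (by simp only [Pi.neg_apply, Pi.mul_apply, id]; ring)

-- With `R* = −∂ + (σ+1)tanh(σx)` one has `R*(xφ) = (σ+2)x tanh(σx)φ − φ`, so that
-- `plusMode σ 0 c₂` agrees with a multiple of `φ` modulo `R*(xφ)`.
lemma exists_solvesDarboux_add_plusMode_zero (hσ : 0 < σ) {u : ℝ → ℝ} (hu : Continuous u)
    (hub : BoundedAtFilter (cocompact ℝ) u) :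
    ∃ c₂ η, SolvesDarboux σ (σ + 1) η (fun x => u x + plusMode σ 0 c₂ x) ∧
      BoundedAtFilter (cocompact ℝ) η := by
  obtain ⟨k, η, hη, hηb⟩ :=
    exists_solvesDarboux_add hσ (by positivity : 0 < σ + 1) hu hub one_pos
  obtain ⟨c₂, hk⟩ : ∃ c₂, k = -(2 * σ * c₂) / (σ + 2) :=
    ⟨-k * (σ + 2) / (2 * σ), by field_simp⟩
  refine ⟨c₂, fun x => η x + 4 * c₂ / (σ + 2) * (x * sechPow σ 1 x), fun x => ?_, ?_⟩
  · refine ((hη x).add (((hasDerivAt_id' x).mul (hasDerivAt_sechPow hσ.ne' 1 x)).const_mul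
      (4 * c₂ / (σ + 2)))).congr_deriv ?_
    simp only [plusMode, hk]
    field_simp
    ring
  · refine hηb.add (.const_mul_left ?_ _)
    simpa only [pow_one] using! (zeroAtFilter_pow_mul_sechPow hσ one_pos 1).boundedAtFilter

lemma SolvesDarboux.add_sechPow {u η : ℝ → ℝ} (hσ : 0 < σ)
    (hη : SolvesDarboux σ (σ + 1) η fun x => u x + plusMode σ 0 c₂ x) (k : ℝ) :
    SolvesDarboux σ (σ + 1) (fun x => η x + k * sechPow σ 1 x)
      fun x => u x + plusMode σ (k * (σ + 2) / 2) c₂ x := fun x => by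
  refine ((hη x).add ((hasDerivAt_sechPow hσ.ne' 1 x).const_mul k)).congr_deriv ?_
  simp only [plusMode]
  ring

-- `c₂` and `c₁` are the Lagrange multipliers of the solvability conditions for `R*` and `S*`.
lemma exists_solvesDarboux_add_plusMode (hσ : 0 < σ) {u : ℝ → ℝ} (hu : Continuous u)
    (hub : BoundedAtFilter (cocompact ℝ) u) :
    ∃ c₁ c₂ ζ η, SolvesDarboux σ 1 ζ η ∧
      SolvesDarboux σ (σ + 1) η (fun x => u x + plusMode σ c₁ c₂ x) ∧
      BoundedAtFilter (cocompact ℝ) ζ ∧ BoundedAtFilter (cocompact ℝ) η := by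
  obtain ⟨c₂, η, hη, hηb⟩ := exists_solvesDarboux_add_plusMode_zero hσ hu hub
  obtain ⟨k, ζ, hζ, hζb⟩ := exists_solvesDarboux_add hσ one_pos
    (continuous_iff_continuousAt.2 fun x => (hη x).continuousAt) hηb one_pos
  exact ⟨_, c₂, ζ, _, hζ, hη.add_sechPow hσ k, hζb,
    hηb.add ((zeroAtFilter_sechPow hσ).boundedAtFilter.const_mul_left k)⟩

end Modulation

section Virial

open Filter

/-- The boundary term of the virial identity for `L₋y = z`. -/
def minusFlux (σ : ℝ) (y : ℝ → ℝ) (x : ℝ) : ℝ :=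
  (deriv y x + tanh (σ * x) * y x)
    * (tanh (σ * x) * (deriv y x + tanh (σ * x) * y x) - y x)

/-- The function `π = Dζ`, where `D = −∂² + (σ−1)sech²(σx)`, expressed through `S*ζ = η` and
`R*η = z`. -/
def darbouxDefect (σ : ℝ) (ζ η z : ℝ → ℝ) (x : ℝ) : ℝ :=
  (σ + 2) * tanh (σ * x) * η x - z x - ζ x

/-- The function `α = S*π` for `π = darbouxDefect σ ζ η z`, expressed through `R*η = z`. -/
def darbouxMomentum (σ : ℝ) (η z : ℝ → ℝ) (x : ℝ) : ℝ :=
  deriv z x + (σ + 1) * tanh (σ * x) * z x - (σ + 1) ^ 2 * η x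

/-- The boundary term of the virial identity for `L₊z = w` with `z = R*S*ζ`, `η = S*ζ`. -/
def plusFlux (σ : ℝ) (ζ η z : ℝ → ℝ) (x : ℝ) : ℝ :=
  z x * darbouxMomentum σ η z x
    + (σ + 1) ^ 2 * (η x * darbouxDefect σ ζ η z x + ζ x * (tanh (σ * x) * ζ x - η x))

/-- The density of the quadratic form for `L₋y = z` as a sum of squares. -/
def minusDissipation (σ : ℝ) (y z : ℝ → ℝ) (x : ℝ) : ℝ :=
  (tanh (σ * x) * (deriv y x + tanh (σ * x) * y x) - z x) ^ 2
    + (σ - 1) * (1 - tanh (σ * x) ^ 2) * (deriv y x + tanh (σ * x) * y x) ^ 2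

/-- The density of the quadratic form for `L₊z = w` as a sum of squares, obtained by conjugating
`L₊` into the repulsive operator `D = −∂² + (σ−1)sech²(σx)`. -/
def plusDissipation (σ : ℝ) (ζ η z : ℝ → ℝ) (x : ℝ) : ℝ :=
  darbouxMomentum σ η z x ^ 2
    + (σ + 1) ^ 2 * (darbouxDefect σ ζ η z x ^ 2 + (tanh (σ * x) * ζ x - η x) ^ 2
      + (σ - 1) * (1 - tanh (σ * x) ^ 2) * ζ x ^ 2)

variable {σ c₁ c₂ : ℝ} {X u v y z w ζ η : ℝ → ℝ}

lemma hasDerivAt_minusFlux (hy : SolvesSchrodinger (potMinus σ) y z) (x : ℝ) :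
    HasDerivAt (minusFlux σ y)
      (minusDissipation σ y z x - z x * (z x - y x)) x := by
  have ht := hasDerivAt_tanh_mul σ x
  have ha := (hy.hasDerivAt_deriv x).add (ht.mul (hy.hasDerivAt x))
  refine (ha.mul ((ht.mul ha).sub (hy.hasDerivAt x))).congr_deriv ?_
  simp only [Pi.add_apply, Pi.mul_apply, Pi.sub_apply, potMinus, phiPow_eq, minusDissipation]
  ring

lemma solvesDarboux_darbouxDefect (hζ : SolvesDarboux σ 1 ζ η) (hη : SolvesDarboux σ (σ + 1) η z)
    (hz : Differentiable ℝ z) :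
    SolvesDarboux σ 1 (darbouxDefect σ ζ η z) (darbouxMomentum σ η z) := fun x => by
  refine (((((hasDerivAt_tanh_mul σ x).const_mul (σ + 2)).mul (hη x)).sub
    (hz x).hasDerivAt).sub (hζ x)).congr_deriv ?_
  simp only [darbouxDefect, darbouxMomentum]
  ring

lemma solvesDarboux_darbouxMomentum (hη : SolvesDarboux σ (σ + 1) η z)
    (hz : SolvesSchrodinger (potPlus σ) z w) :
    SolvesDarboux σ (σ + 1) (darbouxMomentum σ η z) fun x => w x - z x := fun x => by
  refine (((hz.hasDerivAt_deriv x).add (((hasDerivAt_tanh_mul σ x).const_mul (σ + 1)).mul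
    (hz.hasDerivAt x))).sub ((hη x).const_mul ((σ + 1) ^ 2))).congr_deriv ?_
  simp only [darbouxMomentum, potPlus, phiPow_eq]
  ring

lemma hasDerivAt_plusFlux (hζ : SolvesDarboux σ 1 ζ η) (hη : SolvesDarboux σ (σ + 1) η z)
    (hz : SolvesSchrodinger (potPlus σ) z w) (x : ℝ) :
    HasDerivAt (plusFlux σ ζ η z)
      (plusDissipation σ ζ η z x - z x * (w x - z x)) x := by
  have hπ := solvesDarboux_darbouxDefect hζ hη hz.differentiable x
  have hα := solvesDarboux_darbouxMomentum hη hz x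
  refine (((hz.hasDerivAt x).mul hα).add ((((hη x).mul hπ).add ((hζ x).mul
    (((hasDerivAt_tanh_mul σ x).mul (hζ x)).sub (hη x)))).const_mul ((σ + 1) ^ 2))).congr_deriv ?_
  simp only [Pi.mul_apply, Pi.sub_apply, plusDissipation, darbouxMomentum, darbouxDefect]
  ring

lemma zeroAtFilter_minusFlux (hσ : 0 < σ) (hyb : BoundedAtFilter (cocompact ℝ) y)
    (hy' : ZeroAtFilter (cocompact ℝ) (deriv y)) :
    ZeroAtFilter (cocompact ℝ) (minusFlux σ y) := by
  have ht := boundedAtFilter_tanh_mul σ (cocompact ℝ)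
  refine (hy'.boundedAtFilter.add (ht.mul hyb)).mul_zeroAtFilter ((ht.mul_zeroAtFilter hy').add
    (((zeroAtFilter_one_sub_tanh_sq hσ).mul_boundedAtFilter hyb).neg)) |>.congr fun x => ?_
  simp only [Pi.add_apply, Pi.mul_apply, Pi.neg_apply, minusFlux]
  ring

lemma zeroAtFilter_plusFlux (hσ : 0 < σ) (hζ : SolvesDarboux σ 1 ζ η)
    (hη : SolvesDarboux σ (σ + 1) η z) (hz : Differentiable ℝ z)
    (hζb : BoundedAtFilter (cocompact ℝ) ζ) (hηb : BoundedAtFilter (cocompact ℝ) η)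
    (hzb : BoundedAtFilter (cocompact ℝ) z) (hz' : ZeroAtFilter (cocompact ℝ) (deriv z)) :
    ZeroAtFilter (cocompact ℝ) (plusFlux σ ζ η z) := by
  have ht := boundedAtFilter_tanh_mul σ (cocompact ℝ)
  have hs := zeroAtFilter_one_sub_tanh_sq hσ
  have hη' := hη.zeroAtFilter_deriv hσ (by positivity) (fun x => (hz x).hasDerivAt) hηb hzb hz'
  have hζ' := hζ.zeroAtFilter_deriv hσ one_ne_zero hη hζb hηb hη'
  have hπ : ZeroAtFilter (cocompact ℝ) (darbouxDefect σ ζ η z) := by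
    refine hη'.add ((ht.mul_zeroAtFilter hζ').add (hs.mul_boundedAtFilter hζb)).neg
      |>.congr fun x => ?_
    simp only [Pi.add_apply, Pi.mul_apply, Pi.neg_apply, darbouxDefect]
    ring
  have hα : ZeroAtFilter (cocompact ℝ) (darbouxMomentum σ η z) := by
    refine hz'.add (((ht.mul_zeroAtFilter hη').add
      ((hs.mul_boundedAtFilter hηb).smul (σ + 1))).smul (-(σ + 1))) |>.congr fun x => ?_
    simp only [Pi.add_apply, Pi.mul_apply, Pi.smul_apply, smul_eq_mul, darbouxMomentum]
    ring
  refine (hzb.mul_zeroAtFilter hα).add (((hηb.mul_zeroAtFilter hπ).add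
    (hζb.mul_zeroAtFilter hζ')).smul ((σ + 1) ^ 2)) |>.congr fun x => ?_
  simp only [Pi.add_apply, Pi.mul_apply, Pi.smul_apply, smul_eq_mul, plusFlux]
  ring

lemma minusDissipation_nonneg (hσ : 1 ≤ σ) (y z : ℝ → ℝ) (x : ℝ) :
    0 ≤ minusDissipation σ y z x := by
  have := sub_nonneg.2 hσ
  have := sub_nonneg.2 (tanh_sq_lt_one (σ * x)).le
  unfold minusDissipation; positivity

lemma plusDissipation_nonneg (hσ : 1 ≤ σ) (ζ η z : ℝ → ℝ) (x : ℝ) :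
    0 ≤ plusDissipation σ ζ η z x := by
  have := sub_nonneg.2 hσ
  have := sub_nonneg.2 (tanh_sq_lt_one (σ * x)).le
  unfold plusDissipation; positivity

lemma eq_zero_of_plusDissipation_eq_zero (hσ : 1 < σ) {x : ℝ}
    (h : plusDissipation σ ζ η z x = 0) : ζ x = 0 := by
  have := sub_pos.2 hσ
  have := sub_pos.2 (tanh_sq_lt_one (σ * x))
  by_contra hζ
  have : 0 < plusDissipation σ ζ η z x := by unfold plusDissipation; positivity
  exact this.ne' h

lemma modeDissipation_nonneg (hσ : 2 ≤ σ) (c₁ c₂ x : ℝ) : 0 ≤ modeDissipation σ c₁ c₂ x := by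
  have := sub_nonneg.2 hσ
  have := sub_nonneg.2 (tanh_sq_lt_one (σ * x)).le
  unfold modeDissipation; positivity

lemma eq_zero_of_modeDissipation_eq_zero (hσ : 2 ≤ σ) {x : ℝ} (hx : x ≠ 0)
    (h : modeDissipation σ c₁ c₂ x = 0) : c₁ = 0 ∧ c₂ = 0 := by
  have := sub_nonneg.2 hσ
  have := sub_nonneg.2 (tanh_sq_lt_one (σ * x)).le
  have := sechPow_pos σ 1 x
  unfold modeDissipation at h
  constructor <;> by_contra hc <;> refine absurd h (ne_of_gt ?_) <;> positivity

lemma SolvesSchrodinger.zeroAtFilter_wronskian {V f g h : ℝ → ℝ} (hf : SolvesSchrodinger V f g)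
    (hV : BoundedAtFilter (cocompact ℝ) V) (hf₀ : ZeroAtFilter (cocompact ℝ) f)
    (hg₀ : ZeroAtFilter (cocompact ℝ) g) (hh : BoundedAtFilter (cocompact ℝ) h)
    (hh' : BoundedAtFilter (cocompact ℝ) (deriv h)) :
    ZeroAtFilter (cocompact ℝ) fun x => f x * deriv h x - deriv f x * h x := by
  have hf' := hf.zeroAtFilter_deriv hV hf₀ hg₀
  exact ((hf₀.mul_boundedAtFilter hh').add (hf'.mul_boundedAtFilter hh).neg).congr fun _ =>
    (sub_eq_add_neg _ _).symm

/-- The boundary term of the virial identity for `(L₊u, L₋v) = (v, u)`. The corrected components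
are `u + plusMode` and `v + minusMode`; the Wronskians move `L₊` and `L₋` from `u` and `v` onto the
corrections, and `X` is a primitive of `xφ²`. -/
def totalFlux (σ c₁ c₂ : ℝ) (X u v ζ η : ℝ → ℝ) (x : ℝ) : ℝ :=
  minusFlux σ (fun x => v x + minusMode σ c₁ c₂ x) x
    + plusFlux σ ζ η (fun x => u x + plusMode σ c₁ c₂ x) x
    + (plusMode σ c₁ c₂ x * deriv u x - deriv (plusMode σ c₁ c₂) x * u x)
    + (minusMode σ c₁ c₂ x * deriv v x - deriv (minusMode σ c₁ c₂) x * v x)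
    + modeFlux σ c₁ c₂ x - 4 * c₁ * c₂ * X x

lemma hasDerivAt_totalFlux (hσ : σ ≠ 0) (hu : SolvesSchrodinger (potPlus σ) u v)
    (hv : SolvesSchrodinger (potMinus σ) v u) (hζ : SolvesDarboux σ 1 ζ η)
    (hη : SolvesDarboux σ (σ + 1) η fun x => u x + plusMode σ c₁ c₂ x)
    (hX : ∀ x, HasDerivAt X (x * sechPow σ 1 x ^ 2) x) (x : ℝ) :
    HasDerivAt (totalFlux σ c₁ c₂ X u v ζ η)
      (minusDissipation σ (fun x => v x + minusMode σ c₁ c₂ x)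
          (fun x => u x + plusMode σ c₁ c₂ x) x
        + plusDissipation σ ζ η (fun x => u x + plusMode σ c₁ c₂ x) x
        + modeDissipation σ c₁ c₂ x) x := by
  have hy := hv.add (solvesSchrodinger_minusMode hσ c₁ c₂)
  have hz := hu.add (solvesSchrodinger_plusMode hσ c₁ c₂)
  have hWPlus := (solvesSchrodinger_plusMode hσ c₁ c₂).hasDerivAt_wronskian hu x
  have hWMinus := (solvesSchrodinger_minusMode hσ c₁ c₂).hasDerivAt_wronskian hv x
  exact ((((((hasDerivAt_minusFlux hy x).add (hasDerivAt_plusFlux hζ hη hz x)).add hWPlus).add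
    hWMinus).add (hasDerivAt_modeFlux hσ c₁ c₂ x)).sub
    ((hX x).const_mul (4 * c₁ * c₂))).congr_deriv (by ring)

lemma zeroAtFilter_totalFlux (hσ : 0 < σ) (hu : SolvesSchrodinger (potPlus σ) u v)
    (hv : SolvesSchrodinger (potMinus σ) v u) (hub : BoundedAtFilter (cocompact ℝ) u)
    (hvb : BoundedAtFilter (cocompact ℝ) v) (hζ : SolvesDarboux σ 1 ζ η)
    (hη : SolvesDarboux σ (σ + 1) η fun x => u x + plusMode σ c₁ c₂ x)
    (hζb : BoundedAtFilter (cocompact ℝ) ζ) (hηb : BoundedAtFilter (cocompact ℝ) η)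
    (hX : ZeroAtFilter (cocompact ℝ) X) :
    ZeroAtFilter (cocompact ℝ) (totalFlux σ c₁ c₂ X u v ζ η) := by
  obtain ⟨hu', hv'⟩ := zeroAtFilter_deriv_of_solvesSchrodinger hσ hu hv hub hvb
  have hminusMode := solvesSchrodinger_minusMode hσ.ne' c₁ c₂
  have hplusMode := solvesSchrodinger_plusMode hσ.ne' c₁ c₂
  have hm₀ := zeroAtFilter_minusMode hσ c₁ c₂
  have hp₀ := zeroAtFilter_plusMode hσ c₁ c₂
  have hs₀ := zeroAtFilter_modeSource hσ c₂
  have hVMinus := boundedAtFilter_potMinus hσ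
  have hVPlus := boundedAtFilter_potPlus hσ
  have hFMinus := zeroAtFilter_minusFlux hσ (hvb.add hm₀.boundedAtFilter)
    ((hv'.add (hminusMode.zeroAtFilter_deriv hVMinus hm₀ hp₀)).congr
      fun x => (deriv_fun_add (hv.differentiable x) (hminusMode.differentiable x)).symm)
  have hFPlus := zeroAtFilter_plusFlux hσ hζ hη (hu.add hplusMode).differentiable hζb hηb
    (hub.add hp₀.boundedAtFilter) ((hu'.add (hplusMode.zeroAtFilter_deriv hVPlus hp₀ hs₀)).congr
      fun x => (deriv_fun_add (hu.differentiable x) (hplusMode.differentiable x)).symm)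
  have hWPlus := hplusMode.zeroAtFilter_wronskian hVPlus hp₀ hs₀ hub hu'.boundedAtFilter
  have hWMinus := hminusMode.zeroAtFilter_wronskian hVMinus hm₀ hp₀ hvb hv'.boundedAtFilter
  exact (((((hFMinus.add hFPlus).add hWPlus).add hWMinus).add (zeroAtFilter_modeFlux hσ c₁ c₂)).add
    (hX.smul (4 * c₁ * c₂)).neg).congr fun _ => (sub_eq_add_neg _ _).symm

lemma eq_zero_of_solvesSchrodinger (hσ : 2 ≤ σ) (hu : SolvesSchrodinger (potPlus σ) u v)
    (hv : SolvesSchrodinger (potMinus σ) v u) (hub : BoundedAtFilter (cocompact ℝ) u)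
    (hvb : BoundedAtFilter (cocompact ℝ) v) (x : ℝ) : u x = 0 ∧ v x = 0 := by
  have hσ₀ : 0 < σ := by linarith
  obtain ⟨c₁, c₂, ζ, η, hζ, hη, hζb, hηb⟩ :=
    exists_solvesDarboux_add_plusMode hσ₀ hu.differentiable.continuous hub
  obtain ⟨X, hX, hX₀⟩ := exists_hasDerivAt_mul_sechPow_sq hσ₀
  have hminus := minusDissipation_nonneg (by linarith : 1 ≤ σ)
    (fun x => v x + minusMode σ c₁ c₂ x) fun x => u x + plusMode σ c₁ c₂ x
  have hplus := plusDissipation_nonneg (by linarith : 1 ≤ σ) ζ η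
    fun x => u x + plusMode σ c₁ c₂ x
  have hmode := modeDissipation_nonneg hσ c₁ c₂
  have hsum := deriv_eq_zero_of_nonneg_of_zeroAtFilter
    (hasDerivAt_totalFlux hσ₀.ne' hu hv hζ hη hX)
    (fun x => add_nonneg (add_nonneg (hminus x) (hplus x)) (hmode x))
    (zeroAtFilter_totalFlux hσ₀ hu hv hub hvb hζ hη hζb hηb hX₀)
  obtain ⟨rfl, rfl⟩ := eq_zero_of_modeDissipation_eq_zero hσ one_ne_zero
    (by linarith [hsum 1, hminus 1, hplus 1, hmode 1] : modeDissipation σ c₁ c₂ 1 = 0)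
  have hζ₀ (x : ℝ) : ζ x = 0 := eq_zero_of_plusDissipation_eq_zero (by linarith)
    (by linarith [hsum x, hminus x, hplus x, hmode x])
  have hu₀ (x : ℝ) : u x = 0 := by
    simpa [plusMode] using hη.eq_zero_of_left (hζ.eq_zero_of_left hζ₀) x
  exact ⟨hu₀ x, hu.eq_zero_of_left hu₀ x⟩

end Virial

section ThresholdStates

open Filter

variable {σ E : ℝ} {f : ℝ → ℂ × ℂ}

lemma hasDerivAt_of_contDiff_two {F : Type*} [NormedAddCommGroup F] [NormedSpace ℝ F]
    {g : ℝ → F} (hg : ContDiff ℝ 2 g) (x : ℝ) :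
    HasDerivAt g (deriv g x) x ∧ HasDerivAt (deriv g) (iteratedDeriv 2 g x) x := by
  rw [← one_add_one_eq_two, contDiff_succ_iff_deriv] at hg
  rw [iteratedDeriv_succ, iteratedDeriv_one]
  exact ⟨(hg.1 x).hasDerivAt, (hg.2.2.differentiable one_ne_zero x).hasDerivAt⟩

lemma solvesSchrodinger_of_linH_eq_smul (hE : E * E = 1) (hf : ContDiff ℝ 2 f)
    (h : ∀ x, linH σ f x = E • f x) (A : ℂ →L[ℝ] ℝ) :
    SolvesSchrodinger (potPlus σ) (fun x => A (f x).1 + A (f x).2)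
        (fun x => E * (A (f x).1 - A (f x).2)) ∧
      SolvesSchrodinger (potMinus σ) (fun x => E * (A (f x).1 - A (f x).2))
        fun x => A (f x).1 + A (f x).2 := by
  have comp {g : ℝ → ℂ} {g' : ℂ} {x : ℝ} (hg : HasDerivAt g g' x) :
      HasDerivAt (fun y => A (g y)) (A g') x := A.hasFDerivAt.comp_hasDerivAt x hg
  have h₁ (x : ℝ) := hasDerivAt_of_contDiff_two hf.fst x
  have h₂ (x : ℝ) := hasDerivAt_of_contDiff_two hf.snd x
  have heq₁ (x : ℝ) : A (iteratedDeriv 2 (fun y => (f y).1) x) = A (f x).1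
      - (σ + 1) * phiPow σ x * A (f x).1 - σ * phiPow σ x * A (f x).2 - E * A (f x).1 := by
    have := congrArg (A ∘ Prod.fst) (h x)
    simp only [linH, Function.comp_apply, Prod.smul_fst, ← Complex.real_smul, map_add, map_sub,
      map_neg, map_smul, smul_eq_mul] at this
    linarith
  have heq₂ (x : ℝ) : A (iteratedDeriv 2 (fun y => (f y).2) x) = A (f x).2
      - (σ + 1) * phiPow σ x * A (f x).2 - σ * phiPow σ x * A (f x).1 + E * A (f x).2 := by
    have := congrArg (A ∘ Prod.snd) (h x)
    simp only [linH, Function.comp_apply, Prod.smul_snd, ← Complex.real_smul, map_add, map_sub,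
      map_smul, smul_eq_mul] at this
    linarith
  constructor
  · refine .of_hasDerivAt (fun x => (comp (h₁ x).1).add (comp (h₂ x).1)) fun x =>
      ((comp (h₁ x).2).add (comp (h₂ x).2)).congr_deriv ?_
    rw [heq₁, heq₂, potPlus]
    ring
  · refine .of_hasDerivAt (fun x => ((comp (h₁ x).1).sub (comp (h₂ x).1)).const_mul E) fun x =>
      (((comp (h₁ x).2).sub (comp (h₂ x).2)).const_mul E).congr_deriv ?_
    rw [heq₁, heq₂, potMinus]
    linear_combination (-(A (f x).1 + A (f x).2)) * hE

lemma eq_zero_of_linH_eq_smul (hσ : 2 ≤ σ) (hE : E * E = 1) (hf : ContDiff ℝ 2 f)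
    (hb : BoundedAtFilter (cocompact ℝ) f) (h : ∀ x, linH σ f x = E • f x) : f = 0 := by
  have map_eq_zero (A : ℂ →L[ℝ] ℝ) (x : ℝ) : A (f x).1 = 0 ∧ A (f x).2 = 0 := by
    have hb₁ : BoundedAtFilter (cocompact ℝ) fun x => A (f x).1 :=
      ((A.comp (.fst ℝ ℂ ℂ)).isBigO_comp f _).trans hb
    have hb₂ : BoundedAtFilter (cocompact ℝ) fun x => A (f x).2 :=
      ((A.comp (.snd ℝ ℂ ℂ)).isBigO_comp f _).trans hb
    obtain ⟨hu, hv⟩ := solvesSchrodinger_of_linH_eq_smul hE hf h A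
    obtain ⟨hsum, hdiff⟩ := eq_zero_of_solvesSchrodinger hσ hu hv (hb₁.add hb₂)
      ((hb₁.sub hb₂).const_mul_left E) x
    have hdiff : A (f x).1 - A (f x).2 = 0 :=
      (mul_eq_zero.1 hdiff).resolve_left (left_ne_zero_of_mul_eq_one hE)
    constructor <;> linarith
  funext x
  obtain ⟨hre₁, hre₂⟩ := map_eq_zero Complex.reCLM x
  obtain ⟨him₁, him₂⟩ := map_eq_zero Complex.imCLM x
  exact Prod.ext (Complex.ext hre₁ him₁) (Complex.ext hre₂ him₂)

end ThresholdStates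

theorem stmt_16 (σ : ℝ) (hσ : 2 ≤ σ)
    (f : ℝ → ℂ × ℂ) (hf : ContDiff ℝ 2 f) (hb : ∃ B : ℝ, ∀ x : ℝ, ‖f x‖ ≤ B)
    (heq : (∀ x : ℝ, linH σ f x = f x) ∨ (∀ x : ℝ, linH σ f x = -f x)) :
    f = 0 := by
  obtain ⟨B, hB⟩ := hb
  have hb : Filter.BoundedAtFilter (Filter.cocompact ℝ) f :=
    .of_bound B (.of_forall fun x => by simpa using hB x)
  rcases heq with h | h
  · exact eq_zero_of_linH_eq_smul hσ (one_mul 1) hf hb fun x => by rw [h x, one_smul]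
  · exact eq_zero_of_linH_eq_smul hσ (neg_one_mul (-1) |>.trans (neg_neg 1)) hf hb
      fun x => by rw [h x, neg_one_smul]
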